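/- Consider two grid cells K and K'. For each p ∈ {1,2,3,4} let λ1(p), λ2(p), ν1(p), ν2(p) (for K) and λ1'(p), λ2'(p), ν1'(p), ν2'(p) (for K') be positive reals; let μ1(p), μ2(p), μ1'(p), μ2'(p) be nonnegative with μ1(p)+μ2(p)=1 and μ1'(p)+μ2'(p)=1; let θ(p), θ'(p) ∈ [0,2]; let ψ1(p), ψ1'(p), ψ2'(p) ∈ {0,1}; and let c2(p) ∈ (0,1) be shared by the two cells. Define m1 = ∑_{p=1}^{4}( μ1(p)·λ1(p) + μ2(p)·λ2(p) + θ(p)·μ1(p)·ν1(p) ), m2 = −( μ1(1)·λ1(1) + μ2(1)·λ2(1) + c2(1)·μ2(1)·ν2(1) + ψ1(2)·θ(2)·μ1(2)·ν1(2) + (1−ψ1(4))·θ(4)·μ1(4)·ν1(4) ), m4' = −( μ1'(2)·λ1'(2) + μ2'(2)·λ2'(2) + c2(2)·μ2'(2)·ν2'(2) + ψ1'(1)·θ'(1)·μ1'(1)·ν1'(1) + (1−ψ1'(3))·θ'(3)·μ1'(3)·ν1'(3) ), m3' = (1−ψ2'(1))·c2(1)·μ2'(1)·ν2'(1) + (1−ψ2'(2))·c2(2)·μ2'(2)·ν2'(2),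 and A' = ∑_{p=1}^{4} max(λ1(p),λ2(p)) + 2·∑_{p=1}^{4} ν1(p). If c2(1) + c2(2) < ( min(λ1(1),λ2(1)) · min(λ1'(2),λ2'(2)) ) / ( max(ν2'(1),ν2'(2)) · A' ), then m2·m4' − m3'·m1 > 0. (Condition (A3a) of the monotonicity criteria.) -/

import Mathlib

/-!
The two entries `m2`, `m4'` are bounded away from zero by discarding their nonnegative extra terms:
a convex combination of `λ1, λ2` is at least their minimum. Conversely
`m3' ≤ (c2 0 + c2 1) * max (ν2' 0) (ν2' 1)`, and `m1 ≤ A'` since a convex combination is at most the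
maximum and `θ μ1 ≤ 2`. The hypothesis on `c2 0 + c2 1`, with its denominator cleared, says exactly
that the product of the two upper bounds is smaller than the product of the two lower bounds.
-/

lemma min_le_convex_comb {a b s t : ℝ} (hs : 0 ≤ s) (ht : 0 ≤ t) (hst : s + t = 1) :
    min a b ≤ s * a + t * b := by
  calc min a b = s * min a b + t * min a b := by rw [← add_mul, hst, one_mul]
    _ ≤ s * a + t * b := by gcongr <;> simp

lemma convex_comb_le_max {a b s t : ℝ} (hs : 0 ≤ s) (ht : 0 ≤ t) (hst : s + t = 1) :
    s * a + t * b ≤ max a b := by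
  calc s * a + t * b ≤ s * max a b + t * max a b := by gcongr <;> simp
    _ = max a b := by rw [← add_mul, hst, one_mul]

/-- One edge contribution to `m3'`, where `e = 1 - ψ` and `M` bounds the coefficient `ν`. -/
lemma edge_term_le {e c m v M : ℝ} (he0 : 0 ≤ e) (he1 : e ≤ 1) (hc : 0 ≤ c) (hm0 : 0 ≤ m)
    (hm1 : m ≤ 1) (hv : 0 ≤ v) (hvM : v ≤ M) : e * c * m * v ≤ c * M := by
  calc e * c * m * v ≤ 1 * c * 1 * M := by gcongr
    _ = c * M := by ring

/-- Condition (A3a): `m2·m4' − m3'·m1 > 0` for a cell `K` and its southern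
neighbour `K'`. Edges `1,2,3,4` are indexed by `0,1,2,3 : Fin 4`. -/
theorem A3a_cross_product_positive
    (lam1 lam2 nu1 nu2 mu1 mu2 theta psi1 : Fin 4 → ℝ)
    (lam1' lam2' nu1' nu2' mu1' mu2' theta' psi1' psi2' : Fin 4 → ℝ)
    (c2 : Fin 4 → ℝ)
    (hlam1 : ∀ p, 0 < lam1 p) (hlam2 : ∀ p, 0 < lam2 p)
    (hnu1 : ∀ p, 0 < nu1 p) (hnu2 : ∀ p, 0 < nu2 p)
    (hlam1' : ∀ p, 0 < lam1' p) (hlam2' : ∀ p, 0 < lam2' p)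
    (hnu1' : ∀ p, 0 < nu1' p) (hnu2' : ∀ p, 0 < nu2' p)
    (hmu1 : ∀ p, 0 ≤ mu1 p) (hmu2 : ∀ p, 0 ≤ mu2 p)
    (hmusum : ∀ p, mu1 p + mu2 p = 1)
    (hmu1' : ∀ p, 0 ≤ mu1' p) (hmu2' : ∀ p, 0 ≤ mu2' p)
    (hmusum' : ∀ p, mu1' p + mu2' p = 1)
    (htheta : ∀ p, theta p ∈ Set.Icc (0 : ℝ) 2)
    (htheta' : ∀ p, theta' p ∈ Set.Icc (0 : ℝ) 2)
    (hpsi1 : ∀ p, psi1 p = 0 ∨ psi1 p = 1)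
    (hpsi1' : ∀ p, psi1' p = 0 ∨ psi1' p = 1)
    (hpsi2' : ∀ p, psi2' p = 0 ∨ psi2' p = 1)
    (hc2 : ∀ p, c2 p ∈ Set.Ioo (0 : ℝ) 1)
    (hbound : c2 0 + c2 1 <
      (min (lam1 0) (lam2 0) * min (lam1' 1) (lam2' 1)) /
        (max (nu2' 0) (nu2' 1) *
          ((∑ p : Fin 4, max (lam1 p) (lam2 p)) + 2 * ∑ p : Fin 4, nu1 p))) :
    (-(mu1 0 * lam1 0 + mu2 0 * lam2 0 + c2 0 * mu2 0 * nu2 0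
        + psi1 1 * theta 1 * mu1 1 * nu1 1
        + (1 - psi1 3) * theta 3 * mu1 3 * nu1 3))
      * (-(mu1' 1 * lam1' 1 + mu2' 1 * lam2' 1 + c2 1 * mu2' 1 * nu2' 1
        + psi1' 0 * theta' 0 * mu1' 0 * nu1' 0
        + (1 - psi1' 2) * theta' 2 * mu1' 2 * nu1' 2))
      - ((1 - psi2' 0) * c2 0 * mu2' 0 * nu2' 0
        + (1 - psi2' 1) * c2 1 * mu2' 1 * nu2' 1)
      * (∑ p : Fin 4,
          (mu1 p * lam1 p + mu2 p * lam2 p + theta p * mu1 p * nu1 p))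
      > 0 := by
  have hpsi : ∀ p, 0 ≤ psi1 p ∧ 0 ≤ 1 - psi1 p := fun p => by
    rcases hpsi1 p with h | h <;> rw [h] <;> norm_num
  have hpsi' : ∀ p, 0 ≤ psi1' p ∧ 0 ≤ 1 - psi1' p := fun p => by
    rcases hpsi1' p with h | h <;> rw [h] <;> norm_num
  have he : ∀ p, 0 ≤ 1 - psi2' p ∧ 1 - psi2' p ≤ 1 := fun p => by
    rcases hpsi2' p with h | h <;> rw [h] <;> norm_num
  have hmu1_le : ∀ p, mu1 p ≤ 1 := fun p => by linarith [hmu2 p, hmusum p]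
  have hmu2'_le : ∀ p, mu2' p ≤ 1 := fun p => by linarith [hmu1' p, hmusum' p]
  have hA : 0 < (∑ p : Fin 4, max (lam1 p) (lam2 p)) + 2 * ∑ p : Fin 4, nu1 p := by
    have h1 : 0 ≤ ∑ p : Fin 4, max (lam1 p) (lam2 p) :=
      Finset.sum_nonneg fun p _ => (hlam1 p).le.trans (le_max_left _ _)
    have h2 : 0 < ∑ p : Fin 4, nu1 p :=
      Finset.sum_pos (fun p _ => hnu1 p) Finset.univ_nonempty
    linarith
  have hM : 0 < max (nu2' 0) (nu2' 1) := lt_max_of_lt_left (hnu2' 0)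
  rw [lt_div_iff₀ (mul_pos hM hA)] at hbound
  have hm1_nonneg : 0 ≤ ∑ p : Fin 4,
      (mu1 p * lam1 p + mu2 p * lam2 p + theta p * mu1 p * nu1 p) :=
    Finset.sum_nonneg fun p _ => by
      have := mul_nonneg (hmu1 p) (hlam1 p).le
      have := mul_nonneg (hmu2 p) (hlam2 p).le
      have := mul_nonneg (mul_nonneg (htheta p).1 (hmu1 p)) (hnu1 p).le
      linarith
  have hm1_le : ∑ p : Fin 4, (mu1 p * lam1 p + mu2 p * lam2 p + theta p * mu1 p * nu1 p)
      ≤ (∑ p : Fin 4, max (lam1 p) (lam2 p)) + 2 * ∑ p : Fin 4, nu1 p := by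
    rw [Finset.mul_sum, ← Finset.sum_add_distrib]
    refine Finset.sum_le_sum fun p _ => ?_
    refine add_le_add (convex_comb_le_max (hmu1 p) (hmu2 p) (hmusum p)) ?_
    refine mul_le_mul_of_nonneg_right ?_ (hnu1 p).le
    have := mul_le_mul (htheta p).2 (hmu1_le p) (hmu1 p) zero_le_two
    linarith
  have hm3_le : (1 - psi2' 0) * c2 0 * mu2' 0 * nu2' 0 + (1 - psi2' 1) * c2 1 * mu2' 1 * nu2' 1
      ≤ (c2 0 + c2 1) * max (nu2' 0) (nu2' 1) := by
    have h0 := edge_term_le (he 0).1 (he 0).2 (hc2 0).1.le (hmu2' 0) (hmu2'_le 0) (hnu2' 0).le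
      (le_max_left (nu2' 0) (nu2' 1))
    have h1 := edge_term_le (he 1).1 (he 1).2 (hc2 1).1.le (hmu2' 1) (hmu2'_le 1) (hnu2' 1).le
      (le_max_right (nu2' 0) (nu2' 1))
    linarith
  have hm2 : min (lam1 0) (lam2 0) ≤ mu1 0 * lam1 0 + mu2 0 * lam2 0 + c2 0 * mu2 0 * nu2 0
      + psi1 1 * theta 1 * mu1 1 * nu1 1 + (1 - psi1 3) * theta 3 * mu1 3 * nu1 3 := by
    have h0 := min_le_convex_comb (a := lam1 0) (b := lam2 0) (hmu1 0) (hmu2 0) (hmusum 0)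
    have h1 := mul_nonneg (mul_nonneg (hc2 0).1.le (hmu2 0)) (hnu2 0).le
    have h2 := mul_nonneg (mul_nonneg (mul_nonneg (hpsi 1).1 (htheta 1).1) (hmu1 1)) (hnu1 1).le
    have h3 := mul_nonneg (mul_nonneg (mul_nonneg (hpsi 3).2 (htheta 3).1) (hmu1 3)) (hnu1 3).le
    linarith
  have hm4 : min (lam1' 1) (lam2' 1) ≤
      mu1' 1 * lam1' 1 + mu2' 1 * lam2' 1 + c2 1 * mu2' 1 * nu2' 1
      + psi1' 0 * theta' 0 * mu1' 0 * nu1' 0 + (1 - psi1' 2) * theta' 2 * mu1' 2 * nu1' 2 := by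
    have h0 := min_le_convex_comb (a := lam1' 1) (b := lam2' 1) (hmu1' 1) (hmu2' 1) (hmusum' 1)
    have h1 := mul_nonneg (mul_nonneg (hc2 1).1.le (hmu2' 1)) (hnu2' 1).le
    have h2 := mul_nonneg (mul_nonneg (mul_nonneg (hpsi' 0).1 (htheta' 0).1) (hmu1' 0)) (hnu1' 0).le
    have h3 := mul_nonneg (mul_nonneg (mul_nonneg (hpsi' 2).2 (htheta' 2).1) (hmu1' 2)) (hnu1' 2).le
    linarith
  have hmin : 0 < min (lam1 0) (lam2 0) := lt_min (hlam1 0) (hlam2 0)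
  have hmin' : 0 < min (lam1' 1) (lam2' 1) := lt_min (hlam1' 1) (hlam2' 1)
  have hlower := mul_le_mul hm2 hm4 hmin'.le (hmin.le.trans hm2)
  have hupper := mul_le_mul hm3_le hm1_le hm1_nonneg
    (mul_nonneg (add_nonneg (hc2 0).1.le (hc2 1).1.le) hM.le)
  rw [neg_mul_neg]
  linarith
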